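/- arXiv:1903.05073 — 9 statements merged into one kernel-verified Lean document; each statement's English description precedes it below -/
import Mathlib

section
/- Let k ∈ ℝ, let I ⊆ ℝ be an interval containing 0, and let x, y, v : ℝ → ℝ be functions such that for all t ∈ I, x and y are differentiable at t with x'(t) = v(t)·(k·y(t) − 1) and y'(t) = −v(t)·k·x(t). Then the quantity k·(x(t)² + y(t)²)/2 − y(t) is conserved: for all t ∈ I, k·(x(t)² + y(t)²)/2 − y(t) = k·(x(0)² + y(0)²)/2 − y(0). -/
/-!
Since `(k x)² + (k y - 1)² = 2 k (k (x² + y²) / 2 - y) + 1`, for `k ≠ 0` the quantity measures the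
distance from the waypoint to the centre `(0, 1 / k)` of the turning circle, and the Dubins field
rotates the waypoint about this centre. For every `k`, the gradient `(k x, k y - 1)` of the quantity
is orthogonal to the field `v (k y - 1, -k x)`, so its derivative along a trajectory vanishes.
-/

/-- The Dubins invariant of a waypoint at position `(x, y)` relative to a vehicle turning with
curvature `k`; the annulus condition constrains its value. It is normalized so that straight motion,
`k = 0`, is included: there it is the lateral offset `-y`. -/
def dubinsAnnulusQuantity {F : Type*} [Field F] (k x y : F) : F :=
  k * (x ^ 2 + y ^ 2) / 2 - y

theorem eq_of_hasDerivWithinAt_zero {𝕜 E : Type*} [RCLike 𝕜] [NormedAddCommGroup E]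
    [NormedSpace 𝕜 E] {f : 𝕜 → E} {s : Set 𝕜} (hs : Convex ℝ s)
    (hf : ∀ t ∈ s, HasDerivWithinAt f 0 s t) {a b : 𝕜} (ha : a ∈ s) (hb : b ∈ s) :
    f a = f b := by
  have hle : ‖f a - f b‖ ≤ 0 * ‖a - b‖ :=
    hs.norm_image_sub_le_of_norm_hasDerivWithin_le hf (fun _ _ ↦ norm_zero.le) hb ha
  rwa [zero_mul, norm_le_zero_iff, sub_eq_zero] at hle

theorem hasDerivWithinAt_dubinsAnnulusQuantity {𝕜 F : Type*} [NontriviallyNormedField 𝕜]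
    [NormedField F] [NormedAlgebra 𝕜 F] [NeZero (2 : F)] {x y : 𝕜 → F} {x' y' : F} {s : Set 𝕜}
    {t : 𝕜} (k : F) (hx : HasDerivWithinAt x x' s t) (hy : HasDerivWithinAt y y' s t) :
    HasDerivWithinAt (fun r ↦ dubinsAnnulusQuantity k (x r) (y r))
      (k * x t * x' + (k * y t - 1) * y') s t := by
  have hquantity : HasDerivWithinAt (fun r ↦ dubinsAnnulusQuantity k (x r) (y r))
      (k * (2 * x t * x' + 2 * y t * y') / 2 - y') s t := by
    simpa [dubinsAnnulusQuantity] using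
      ((((hx.fun_pow 2).fun_add (hy.fun_pow 2)).const_mul k).div_const 2).fun_sub hy
  refine hquantity.congr_deriv ?_
  field_simp
  ring

theorem dubins_gradient_dot_field_eq_zero {R : Type*} [CommRing R] (k x y v : R) :
    k * x * (v * (k * y - 1)) + (k * y - 1) * (-v * k * x) = 0 := by
  ring

theorem dubins_annulus_quantity_conserved_general {𝕜 F : Type*} [RCLike 𝕜] [NormedField F]
    [NormedAlgebra 𝕜 F] (k : F) {s : Set 𝕜} (hs : Convex ℝ s) {x y v : 𝕜 → F}
    (hx : ∀ t ∈ s, HasDerivWithinAt x (v t * (k * y t - 1)) s t)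
    (hy : ∀ t ∈ s, HasDerivWithinAt y (-(v t) * k * x t) s t)
    {a b : 𝕜} (ha : a ∈ s) (hb : b ∈ s) :
    dubinsAnnulusQuantity k (x a) (y a) = dubinsAnnulusQuantity k (x b) (y b) := by
  have : CharZero F := Algebra.charZero_of_charZero 𝕜 F
  have hderiv (t : 𝕜) (ht : t ∈ s) :
      HasDerivWithinAt (fun r ↦ dubinsAnnulusQuantity k (x r) (y r)) 0 s t :=
    (hasDerivWithinAt_dubinsAnnulusQuantity k (hx t ht) (hy t ht)).congr_deriv
      (dubins_gradient_dot_field_eq_zero k (x t) (y t) (v t))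
  exact eq_of_hasDerivWithinAt_zero hs hderiv ha hb

/-- Conservation of `k·(x² + y²)/2 − y` along the planar Dubins plant ODE
`x' = v·(k·y − 1)`, `y' = −v·k·x` on an interval `I` containing `0`. -/
theorem dubins_annulus_quantity_conserved
    (k : ℝ) (I : Set ℝ) (hI : I.OrdConnected) (h0 : (0 : ℝ) ∈ I)
    (x y v : ℝ → ℝ)
    (hx : ∀ t ∈ I, HasDerivAt x (v t * (k * y t - 1)) t)
    (hy : ∀ t ∈ I, HasDerivAt y (-(v t) * k * x t) t) :
    ∀ t ∈ I, k * (x t ^ 2 + y t ^ 2) / 2 - y t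
      = k * (x 0 ^ 2 + y 0 ^ 2) / 2 - y 0 := fun _ ht ↦
  dubins_annulus_quantity_conserved_general k hI.convex (fun t ht ↦ (hx t ht).hasDerivWithinAt)
    (fun t ht ↦ (hy t ht).hasDerivWithinAt) ht h0
end

section
/- Let k ∈ ℝ with k ≠ 0, let I ⊆ ℝ be an interval containing 0, and let x, y, v : ℝ → ℝ satisfy, for all t ∈ I, x'(t) = v(t)·(k·y(t) − 1) and y'(t) = −v(t)·k·x(t). Then for all t ∈ I, x(t)² + (y(t) − 1/k)² = x(0)² + (y(0) − 1/k)², i.e., the trajectory stays on the circle of fixed radius centered at (0, 1/k). -/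
/-!
Along every solution, the derivative of `k * (x ^ 2 + y ^ 2) - 2 * y` vanishes identically, so this
quantity is constant. For `k ≠ 0`, completing the square shows that dividing it by `k` gives
`x ^ 2 + (y - 1 / k) ^ 2` up to an additive constant.
-/

theorem is_const_of_hasDerivWithinAt_zero {𝕜 G : Type*} [RCLike 𝕜] [NormedAddCommGroup G]
    [NormedSpace 𝕜 G] {f : 𝕜 → G} {s : Set 𝕜} (hs : Convex ℝ s)
    (hf : ∀ t ∈ s, HasDerivWithinAt f 0 s t) {a b : 𝕜} (ha : a ∈ s) (hb : b ∈ s) :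
    f b = f a := by
  have hbound : ‖f b - f a‖ ≤ 0 * ‖b - a‖ :=
    hs.norm_image_sub_le_of_norm_hasDerivWithin_le hf (fun _ _ ↦ norm_zero.le) ha hb
  rwa [zero_mul, norm_le_zero_iff, sub_eq_zero] at hbound

/-- The first integral of the Dubins plant with curvature `k`, at the waypoint position `(x, y)`.
It is free of division so that it also covers straight-line motion: at `k = 0` its level sets are
the lines `y = const`, and for `k ≠ 0` they are the circles centered at `(0, 1 / k)`. -/
def dubinsFirstIntegral {R : Type*} [Ring R] (k x y : R) : R :=
  k * (x ^ 2 + y ^ 2) - 2 * y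

theorem sq_add_sub_one_div_sq_eq_dubinsFirstIntegral {K : Type*} [Field K] {k : K} (hk : k ≠ 0)
    (x y : K) :
    x ^ 2 + (y - 1 / k) ^ 2 = dubinsFirstIntegral k x y / k + (1 / k) ^ 2 := by
  unfold dubinsFirstIntegral
  field_simp
  ring

theorem hasDerivWithinAt_dubinsFirstIntegral {𝕜 : Type*} [NontriviallyNormedField 𝕜]
    {k v t : 𝕜} {x y : 𝕜 → 𝕜} {s : Set 𝕜}
    (hx : HasDerivWithinAt x (v * (k * y t - 1)) s t)
    (hy : HasDerivWithinAt y (-v * k * x t) s t) :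
    HasDerivWithinAt (fun r ↦ dubinsFirstIntegral k (x r) (y r)) 0 s t := by
  have hderiv : HasDerivWithinAt (fun r ↦ dubinsFirstIntegral k (x r) (y r))
      (k * (2 * x t * (v * (k * y t - 1)) + 2 * y t * (-v * k * x t)) -
        2 * (-v * k * x t)) s t := by
    simpa [dubinsFirstIntegral] using
      (((hx.fun_pow 2).fun_add (hy.fun_pow 2)).const_mul k).fun_sub (hy.const_mul 2)
  exact hderiv.congr_deriv (by ring)

section Trajectory

variable {𝕜 : Type*} [RCLike 𝕜] {k : 𝕜} {I : Set 𝕜} {x y v : 𝕜 → 𝕜}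

theorem dubinsFirstIntegral_eq_of_hasDerivWithinAt (hI : Convex ℝ I)
    (hx : ∀ t ∈ I, HasDerivWithinAt x (v t * (k * y t - 1)) I t)
    (hy : ∀ t ∈ I, HasDerivWithinAt y (-(v t) * k * x t) I t)
    {a b : 𝕜} (ha : a ∈ I) (hb : b ∈ I) :
    dubinsFirstIntegral k (x b) (y b) = dubinsFirstIntegral k (x a) (y a) :=
  is_const_of_hasDerivWithinAt_zero hI
    (fun t ht ↦ hasDerivWithinAt_dubinsFirstIntegral (hx t ht) (hy t ht)) ha hb

theorem dubins_stays_on_circle_general (hk : k ≠ 0) (hI : Convex ℝ I)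
    (hx : ∀ t ∈ I, HasDerivWithinAt x (v t * (k * y t - 1)) I t)
    (hy : ∀ t ∈ I, HasDerivWithinAt y (-(v t) * k * x t) I t)
    {a b : 𝕜} (ha : a ∈ I) (hb : b ∈ I) :
    x b ^ 2 + (y b - 1 / k) ^ 2 = x a ^ 2 + (y a - 1 / k) ^ 2 := by
  rw [sq_add_sub_one_div_sq_eq_dubinsFirstIntegral hk,
    sq_add_sub_one_div_sq_eq_dubinsFirstIntegral hk,
    dubinsFirstIntegral_eq_of_hasDerivWithinAt hI hx hy ha hb]

end Trajectory

/-- Along the planar Dubins plant ODE `x' = v·(k·y − 1)`, `y' = −v·k·x` with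
curvature `k ≠ 0`, the trajectory stays on the circle of fixed radius centered
at `(0, 1/k)`. -/
theorem dubins_stays_on_circle
    (k : ℝ) (hk : k ≠ 0) (I : Set ℝ) (hI : I.OrdConnected) (h0 : (0 : ℝ) ∈ I)
    (x y v : ℝ → ℝ)
    (hx : ∀ t ∈ I, HasDerivAt x (v t * (k * y t - 1)) t)
    (hy : ∀ t ∈ I, HasDerivAt y (-(v t) * k * x t) t) :
    ∀ t ∈ I, x t ^ 2 + (y t - 1 / k) ^ 2 = x 0 ^ 2 + (y 0 - 1 / k) ^ 2 :=
  fun _ ht ↦ dubins_stays_on_circle_general hk hI.convex (fun s hs ↦ (hx s hs).hasDerivWithinAt)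
    (fun s hs ↦ (hy s hs).hasDerivWithinAt) h0 ht
end

section
/- Let k ∈ ℝ, τ ≥ 0, and let x, y, v : ℝ → ℝ satisfy, for all t ∈ [0, τ], x'(t) = v(t)·(k·y(t) − 1) and y'(t) = −v(t)·k·x(t). Suppose there are constants v̄ > 0 and δ > 0 such that v(t) ≥ v̄ and x(t) ≥ δ for all t ∈ [0, τ]. Then x(τ)² + y(τ)² ≤ x(0)² + y(0)² − 2·v̄·δ·τ; in particular the squared distance of the waypoint to the origin strictly decreases. -/
open Set

theorem image_sub_le_mul_sub_of_deriv_right_le {f f' : ℝ → ℝ} {a b C : ℝ} (hab : a ≤ b)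
    (hf : ContinuousOn f (Icc a b))
    (hf' : ∀ t ∈ Ico a b, HasDerivWithinAt f (f' t) (Ici t) t)
    (bound : ∀ t ∈ Ico a b, f' t ≤ C) :
    f b - f a ≤ C * (b - a) := by
  have hline (t : ℝ) : HasDerivAt (fun s => f a + C * (s - a)) C t := by
    simpa only [mul_one] using (((hasDerivAt_id' t).sub_const a).const_mul C).const_add (f a)
  have hle : f b ≤ f a + C * (b - a) :=
    image_le_of_deriv_right_le_deriv_boundary (B := fun s => f a + C * (s - a)) hf hf'
      (by simp) (fun t _ => (hline t).continuousAt.continuousWithinAt)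
      (fun t _ => (hline t).hasDerivWithinAt) bound (right_mem_Icc.mpr hab)
  exact sub_le_iff_le_add'.mpr hle

/- The plant velocity is `v k (y, -x) + v (-1, 0)`: the curvature part rotates the waypoint
about the origin and leaves its distance unchanged. -/
theorem hasDerivWithinAt_dubins_sq_dist {x y : ℝ → ℝ} {s : Set ℝ} {k v t : ℝ}
    (hx : HasDerivWithinAt x (v * (k * y t - 1)) s t)
    (hy : HasDerivWithinAt y (-v * k * x t) s t) :
    HasDerivWithinAt (fun u => x u ^ 2 + y u ^ 2) (-2 * (v * x t)) s t :=
  ((hx.fun_pow 2).fun_add (hy.fun_pow 2)).congr_deriv (by push_cast; ring)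

/- Only right derivatives are required, so that paths composed of arcs and segments, along which
the curvature jumps, are covered. -/
theorem dubins_sq_dist_progress_general {k x y v : ℝ → ℝ} {a b vbar δ : ℝ} (hab : a ≤ b)
    (hxc : ContinuousOn x (Icc a b)) (hyc : ContinuousOn y (Icc a b))
    (hx : ∀ t ∈ Ico a b, HasDerivWithinAt x (v t * (k t * y t - 1)) (Ici t) t)
    (hy : ∀ t ∈ Ico a b, HasDerivWithinAt y (-(v t) * k t * x t) (Ici t) t)
    (hvbar : 0 ≤ vbar) (hδ : 0 ≤ δ)
    (hv : ∀ t ∈ Ico a b, vbar ≤ v t) (hxlb : ∀ t ∈ Ico a b, δ ≤ x t) :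
    x b ^ 2 + y b ^ 2 ≤ x a ^ 2 + y a ^ 2 - 2 * vbar * δ * (b - a) := by
  have hspeed : ∀ t ∈ Ico a b, -2 * (v t * x t) ≤ -2 * (vbar * δ) := fun t ht =>
    mul_le_mul_of_nonpos_left
      (mul_le_mul (hv t ht) (hxlb t ht) hδ (hvbar.trans (hv t ht))) (by norm_num)
  have hdrop : (x b ^ 2 + y b ^ 2) - (x a ^ 2 + y a ^ 2) ≤ -2 * (vbar * δ) * (b - a) :=
    image_sub_le_mul_sub_of_deriv_right_le hab ((hxc.pow 2).add (hyc.pow 2))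
      (fun t ht => hasDerivWithinAt_dubins_sq_dist (hx t ht) (hy t ht)) hspeed
  linarith

/-- Along the planar Dubins plant ODE, if the speed is bounded below by
`v̄ > 0` and the waypoint's forward coordinate is bounded below by `δ > 0`
on `[0, τ]`, then the squared distance to the origin decreases by at least
`2·v̄·δ·τ`. -/
theorem dubins_sq_dist_progress
    (k τ : ℝ) (hτ : 0 ≤ τ)
    (x y v : ℝ → ℝ)
    (hx : ∀ t ∈ Set.Icc (0 : ℝ) τ, HasDerivAt x (v t * (k * y t - 1)) t)
    (hy : ∀ t ∈ Set.Icc (0 : ℝ) τ, HasDerivAt y (-(v t) * k * x t) t)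
    (vbar δ : ℝ) (hvbar : 0 < vbar) (hδ : 0 < δ)
    (hv : ∀ t ∈ Set.Icc (0 : ℝ) τ, vbar ≤ v t)
    (hxlb : ∀ t ∈ Set.Icc (0 : ℝ) τ, δ ≤ x t) :
    x τ ^ 2 + y τ ^ 2 ≤ x 0 ^ 2 + y 0 ^ 2 - 2 * vbar * δ * τ := by
  simpa only [sub_zero] using dubins_sq_dist_progress_general hτ
    (HasDerivAt.continuousOn hx) (HasDerivAt.continuousOn hy)
    (fun t ht => (hx t (Ico_subset_Icc_self ht)).hasDerivWithinAt)
    (fun t ht => (hy t (Ico_subset_Icc_self ht)).hasDerivWithinAt) hvbar.le hδ.le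
    (fun t ht => hv t (Ico_subset_Icc_self ht)) (fun t ht => hxlb t (Ico_subset_Icc_self ht))
end

section
/- Let k ≠ 0 and ε > 0 with |k|·ε ≤ 1, and let x, y ∈ ℝ. Then |k·(x² + y² − ε²)/2 − y| < ε if and only if |Real.sqrt(x² + (y − 1/k)²) − 1/|k|| < ε; i.e., the annulus condition holds exactly when the circle about (0, 1/k) through (x, y) has radius within ε of 1/|k|. -/
/-!
Let `r = 1 / |k|` be the turning radius and `R` the distance from `(x, y)` to the centre
`(0, 1 / k)`. Dividing the annulus condition by `|k| / 2` turns it into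
`|R ^ 2 - r ^ 2 - ε ^ 2| < 2 * r * ε`. By the law of cosines, this says that `R`, `r` and `ε` are
the side lengths of a nondegenerate triangle: `|R - r| < ε` and `ε < R + r`. When `ε ≤ r`, the
first of these inequalities implies the second.
-/

theorem lt_add_of_abs_sub_lt_of_le {α : Type*} [AddCommGroup α] [LinearOrder α]
    [IsOrderedAddMonoid α] {a b c : α} (habs : |a - b| < c) (hcb : c ≤ b) : c < a + b := by
  have sub_lt_self : b - a < b := (abs_sub_lt_iff.mp habs).2.trans_le hcb
  have a_pos : 0 < a := (sub_lt_self_iff b).mp sub_lt_self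
  exact hcb.trans_lt (lt_add_of_pos_left b a_pos)

section OrderedRing

variable {α : Type*} [CommRing α] [LinearOrder α] [IsStrictOrderedRing α]

theorem abs_sq_sub_sq_sub_sq_lt_iff (a b c : α) :
    |a ^ 2 - b ^ 2 - c ^ 2| < 2 * b * c ↔ |b - c| < |a| ∧ |a| < |b + c| := by
  rw [← sq_lt_sq, ← sq_lt_sq, sub_sq, add_sq, abs_lt]
  constructor <;> rintro ⟨lower, upper⟩ <;> constructor <;> linarith

theorem abs_sq_sub_sq_sub_sq_lt_iff_abs_sub_lt_and_lt_add {a b : α}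
    (ha : 0 ≤ a) (hb : 0 ≤ b) (c : α) :
    |a ^ 2 - b ^ 2 - c ^ 2| < 2 * b * c ↔ |a - b| < c ∧ c < a + b := by
  rw [abs_sq_sub_sq_sub_sq_lt_iff, abs_of_nonneg ha, abs_lt, abs_lt, lt_abs]
  constructor
  · rintro ⟨⟨hc, hbc⟩, hadd | hneg⟩
    · exact ⟨⟨by linarith, by linarith⟩, by linarith⟩
    · linarith
  · rintro ⟨⟨hba, hab⟩, hc⟩
    exact ⟨⟨by linarith, by linarith⟩, Or.inl (by linarith)⟩

end OrderedRing

theorem curvature_mul_sub_eq_half_mul_sq_dist_center_sub {K : Type*} [Field K] [NeZero (2 : K)]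
    {k : K} (hk : k ≠ 0) (ε x y : K) :
    k * (x ^ 2 + y ^ 2 - ε ^ 2) / 2 - y =
      k / 2 * (x ^ 2 + (y - 1 / k) ^ 2 - (1 / k) ^ 2 - ε ^ 2) := by
  field_simp
  ring

theorem annulus_iff_abs_sq_radius_sub_lt {k : ℝ} (hk : k ≠ 0) (ε x y : ℝ) :
    |k * (x ^ 2 + y ^ 2 - ε ^ 2) / 2 - y| < ε ↔
      |√(x ^ 2 + (y - 1 / k) ^ 2) ^ 2 - (1 / |k|) ^ 2 - ε ^ 2| < 2 * (1 / |k|) * ε := by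
  have half_pos : 0 < |k| / 2 := by positivity
  have scaled_tolerance : ε / (|k| / 2) = 2 * (1 / |k|) * ε := by field_simp
  have sq_turning_radius : (1 / |k|) ^ 2 = (1 / k) ^ 2 := by rw [div_pow, div_pow, sq_abs]
  rw [Real.sq_sqrt (by positivity), sq_turning_radius,
    curvature_mul_sub_eq_half_mul_sq_dist_center_sub hk, abs_mul, abs_div, abs_two,
    ← lt_div_iff₀' half_pos, scaled_tolerance]

theorem annulus_iff_radius_close_general {k : ℝ} (hk : k ≠ 0) (ε x y : ℝ) :
    |k * (x ^ 2 + y ^ 2 - ε ^ 2) / 2 - y| < ε ↔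
      |√(x ^ 2 + (y - 1 / k) ^ 2) - 1 / (|k|)| < ε ∧
        ε < √(x ^ 2 + (y - 1 / k) ^ 2) + 1 / |k| :=
  (annulus_iff_abs_sq_radius_sub_lt hk ε x y).trans
    (abs_sq_sub_sq_sub_sq_lt_iff_abs_sub_lt_and_lt_add (Real.sqrt_nonneg _) (by positivity) ε)

/-- For `k ≠ 0` and `0 < ε` with `|k|·ε ≤ 1`, the annulus condition
`|k·(x² + y² − ε²)/2 − y| < ε` holds iff the radius of the circle about
`(0, 1/k)` through `(x, y)` is within `ε` of `1/|k|`. -/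
theorem annulus_iff_radius_close
    (k ε : ℝ) (hk : k ≠ 0) (hε : 0 < ε) (hkε : |k| * ε ≤ 1) (x y : ℝ) :
    |k * (x ^ 2 + y ^ 2 - ε ^ 2) / 2 - y| < ε ↔
      |Real.sqrt (x ^ 2 + (y - 1 / k) ^ 2) - 1 / (|k|)| < ε := by
  have hεr : ε ≤ 1 / |k| := (le_div_iff₀' (abs_pos.mpr hk)).mpr hkε
  exact (annulus_iff_radius_close_general hk ε x y).trans
    (and_iff_left_of_imp fun hclose => lt_add_of_abs_sub_lt_of_le hclose hεr)
end

section
/- Let k ≠ 0 and ε > 0 with |k|·ε ≤ 1, and let x, y ∈ ℝ satisfy |k·(x² + y² − ε²)/2 − y| < ε. Then there exists a point (x₁, y₁) ∈ ℝ² with x₁² + (y₁ − 1/k)² = x² + (y − 1/k)² and x₁² + y₁² < ε²; i.e., the circle centered at (0, 1/k) through (x, y) meets the open ball of radius ε around the origin. -/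
/-!
Multiplying the annulus condition by `2 / |k|` turns it into `|r² - c² - ε²| < 2cε`, where
`r` is the radius of the circle and `c = 1 / |k|` the distance of its center from the origin. This
says `(c - ε)² < r² < (c + ε)²`, whence `|r - c| < ε`; and `|r - c|` is the distance from the origin
to the circle, attained where the line through the center and the origin meets it.
-/

theorem abs_sub_lt_of_abs_sq_sub_sq_sub_sq_lt {r c ε : ℝ} (hr : 0 ≤ r) (hc : 0 ≤ c)
    (h : |r ^ 2 - c ^ 2 - ε ^ 2| < 2 * c * ε) : |r - c| < ε := by
  have hcε : 0 < 2 * c * ε := (abs_nonneg _).trans_lt h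
  have hε : 0 < ε := pos_of_mul_pos_right hcε (by positivity)
  obtain ⟨hlower, hupper⟩ := abs_lt.mp h
  have hinner : c - ε < r := lt_of_pow_lt_pow_left₀ 2 hr (by linarith [sub_sq c ε])
  have houter : r < c + ε := lt_of_pow_lt_pow_left₀ 2 (by positivity) (by linarith [add_sq c ε])
  exact abs_sub_lt_iff.mpr ⟨by linarith, by linarith⟩

theorem exists_mem_sphere_norm_eq_abs_sub {E : Type*} [NormedAddCommGroup E] [NormedSpace ℝ E]
    {c : E} (hc : c ≠ 0) {r : ℝ} (hr : 0 ≤ r) :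
    ∃ q ∈ Metric.sphere c r, ‖q‖ = |r - ‖c‖| := by
  have hc' : ‖c‖ ≠ 0 := norm_ne_zero_iff.mpr hc
  refine ⟨(1 - r / ‖c‖) • c, ?_, ?_⟩
  · have hdiff : (1 - r / ‖c‖) • c - c = -((r / ‖c‖) • c) := by module
    rw [mem_sphere_iff_norm, hdiff, norm_neg, norm_smul, Real.norm_of_nonneg (by positivity),
      div_mul_cancel₀ r hc']
  · calc ‖(1 - r / ‖c‖) • c‖ = |(1 - r / ‖c‖) * ‖c‖| := by
          rw [norm_smul, Real.norm_eq_abs, abs_mul, abs_norm]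
      _ = |‖c‖ - r| := by rw [sub_mul, one_mul, div_mul_cancel₀ r hc']
      _ = |r - ‖c‖| := abs_sub_comm _ _

theorem annulus_condition_iff {k : ℝ} (hk : k ≠ 0) (ε x y : ℝ) :
    |k * (x ^ 2 + y ^ 2 - ε ^ 2) / 2 - y| < ε ↔
      |x ^ 2 + (y - 1 / k) ^ 2 - ‖1 / k‖ ^ 2 - ε ^ 2| < 2 * ‖1 / k‖ * ε := by
  have hfactor : x ^ 2 + (y - 1 / k) ^ 2 - (1 / k) ^ 2 - ε ^ 2 =
      2 * (1 / k) * (k * (x ^ 2 + y ^ 2 - ε ^ 2) / 2 - y) := by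
    field_simp
    ring
  rw [Real.norm_eq_abs, sq_abs, hfactor, abs_mul, abs_mul, abs_two,
    mul_lt_mul_iff_right₀ (by positivity)]

theorem annulus_circle_meets_goal_general {k ε : ℝ} (hk : k ≠ 0) {x y : ℝ}
    (hann : |k * (x ^ 2 + y ^ 2 - ε ^ 2) / 2 - y| < ε) :
    ∃ x₁ y₁ : ℝ, x₁ ^ 2 + (y₁ - 1 / k) ^ 2 = x ^ 2 + (y - 1 / k) ^ 2 ∧
      x₁ ^ 2 + y₁ ^ 2 < ε ^ 2 := by
  obtain ⟨r, hr, hr_sq⟩ : ∃ r : ℝ, 0 ≤ r ∧ r ^ 2 = x ^ 2 + (y - 1 / k) ^ 2 :=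
    ⟨_, Real.sqrt_nonneg _, Real.sq_sqrt (by positivity)⟩
  have hdist : |r - ‖1 / k‖| < ε := by
    rw [annulus_condition_iff hk, ← hr_sq] at hann
    exact abs_sub_lt_of_abs_sq_sub_sq_sub_sq_lt hr (norm_nonneg _) hann
  -- The nearest point lies on the `y`-axis, so it is found on a sphere in the line `ℝ`.
  obtain ⟨q, hq, hq_norm⟩ := exists_mem_sphere_norm_eq_abs_sub (one_div_ne_zero hk) hr
  rw [mem_sphere_iff_norm, Real.norm_eq_abs] at hq
  have hq_lt : |q| < ε := hq_norm.trans_lt hdist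
  refine ⟨0, q, ?_, ?_⟩
  · rw [← hr_sq, ← hq, sq_abs, zero_pow two_ne_zero, zero_add]
  · rw [zero_pow two_ne_zero, zero_add]
    exact sq_lt_sq.mpr (hq_lt.trans_le (le_abs_self ε))

/-- If the annulus condition holds at `(x, y)`, then the circle centered at
`(0, 1/k)` through `(x, y)` meets the open ball of radius `ε` around the
origin. -/
theorem annulus_circle_meets_goal
    (k ε : ℝ) (hk : k ≠ 0) (hε : 0 < ε) (hkε : |k| * ε ≤ 1) (x y : ℝ)
    (hann : |k * (x ^ 2 + y ^ 2 - ε ^ 2) / 2 - y| < ε) :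
    ∃ x₁ y₁ : ℝ, x₁ ^ 2 + (y₁ - 1 / k) ^ 2 = x ^ 2 + (y - 1 / k) ^ 2 ∧
      x₁ ^ 2 + y₁ ^ 2 < ε ^ 2 :=
  annulus_circle_meets_goal_general hk hann
end

section
/- Let ε > 0, A > 0, B > 0, k ∈ ℝ, 0 ≤ vl, vh ≥ 0, v ≥ 0, and x, y ∈ ℝ. Suppose (v ≤ vh ∨ (1+|k|·ε)²·(v² − vh²)/(2·B) + ε ≤ max(|x|,|y|)) and (vl ≤ v ∨ (1+|k|·ε)²·(vl² − v²)/(2·A) + ε ≤ max(|x|,|y|)). If Real.sqrt(x² + y²) ≤ ε, then vl ≤ v ≤ vh. (This is the paper's implication from the loop invariant J to the safety postcondition: inside the goal region, the speed limits hold.) -/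
/-!
Closing a gap between two speeds `v₁ > v₂ ≥ 0` takes a positive distance. Hence a limit predicate
that holds although `v₁ > v₂` puts the waypoint at sup-norm distance more than `ε`, whereas the
Euclidean ball of radius `ε` lies inside the sup-norm ball of radius `ε`.
-/

section OrderedField

variable {K : Type*} [Field K] [LinearOrder K] [IsStrictOrderedRing K]
  {k ε v₁ v₂ a x y : K}

/-- The bound `(1 + |k| ε)² (v₁² - v₂²) / (2 a)` on the distance covered while the speed passes
between `v₁` and `v₂` at acceleration magnitude `a`, along a path of curvature `k` followed with
tolerance `ε`. It is signed: negative when `v₁² < v₂²`. -/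
def speedChangeDist (k ε v₁ v₂ a : K) : K :=
  (1 + |k| * ε) ^ 2 * (v₁ ^ 2 - v₂ ^ 2) / (2 * a)

/-- The limit predicate `Lim(v₁, v₂, a, x, y)` of the loop invariant: any gap from `v₁`
down to `v₂` can be closed, at acceleration magnitude `a`, before the waypoint `(x, y)` comes within
`ε` of the origin. The distance to the origin is the sup norm, written `max |x| |y|`. -/
def SpeedLimit (k ε v₁ v₂ a x y : K) : Prop :=
  v₁ ≤ v₂ ∨ speedChangeDist k ε v₁ v₂ a + ε ≤ max |x| |y|

lemma speedChangeDist_pos (hε : 0 ≤ ε) (ha : 0 < a) (hv₂ : 0 ≤ v₂) (hlt : v₂ < v₁) :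
    0 < speedChangeDist k ε v₁ v₂ a := by
  have hsq : 0 < v₁ ^ 2 - v₂ ^ 2 := sub_pos.2 (pow_lt_pow_left₀ hlt hv₂ two_ne_zero)
  unfold speedChangeDist
  positivity

lemma SpeedLimit.le_of_max_abs_le (h : SpeedLimit k ε v₁ v₂ a x y) (ha : 0 < a) (hv₂ : 0 ≤ v₂)
    (hgoal : max |x| |y| ≤ ε) : v₁ ≤ v₂ := by
  have hε : 0 ≤ ε := (abs_nonneg x).trans ((le_max_left _ _).trans hgoal)
  rcases h with hle | hdist
  · exact hle
  · by_contra! hlt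
    have hpos : 0 < speedChangeDist k ε v₁ v₂ a := speedChangeDist_pos hε ha hv₂ hlt
    linarith

theorem invariant_implies_safe_general {A B vl vh v : K}
    (hA : 0 < A) (hB : 0 < B) (hvh : 0 ≤ vh) (hv : 0 ≤ v)
    (hupper : SpeedLimit k ε v vh B x y) (hlower : SpeedLimit k ε vl v A x y)
    (hgoal : max |x| |y| ≤ ε) :
    vl ≤ v ∧ v ≤ vh :=
  ⟨hlower.le_of_max_abs_le hA hv hgoal, hupper.le_of_max_abs_le hB hvh hgoal⟩

end OrderedField

lemma max_abs_le_sqrt_sq_add_sq (x y : ℝ) : max |x| |y| ≤ √(x ^ 2 + y ^ 2) :=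
  max_le (Real.abs_le_sqrt (le_add_of_nonneg_right (sq_nonneg y)))
    (Real.abs_le_sqrt (le_add_of_nonneg_left (sq_nonneg x)))

/-- Loop invariant implies safety postcondition: if the braking-distance limit
predicates `Lim(vl, v, A, x, y)` and `Lim(v, vh, B, x, y)` hold, then inside
the goal region of radius `ε` the speed limits hold. -/
theorem invariant_implies_safe
    (ε A B k vl vh v x y : ℝ)
    (hε : 0 < ε) (hA : 0 < A) (hB : 0 < B)
    (hvl : 0 ≤ vl) (hvh : 0 ≤ vh) (hv : 0 ≤ v)
    (hupper : v ≤ vh ∨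
      (1 + |k| * ε) ^ 2 * (v ^ 2 - vh ^ 2) / (2 * B) + ε ≤ max |x| |y|)
    (hlower : vl ≤ v ∨
      (1 + |k| * ε) ^ 2 * (vl ^ 2 - v ^ 2) / (2 * A) + ε ≤ max |x| |y|)
    (hgoal : Real.sqrt (x ^ 2 + y ^ 2) ≤ ε) :
    vl ≤ v ∧ v ≤ vh :=
  invariant_implies_safe_general hA hB hvh hv hupper hlower
    ((max_abs_le_sqrt_sq_add_sq x y).trans hgoal)
end

section
/- Let ε > 0, A > 0, B > 0, T > 0, k ∈ ℝ, 0 ≤ vl, and vh with B·T ≤ vh − vl. Let v > vh, and x, y ∈ ℝ with (1+|k|·ε)²·(v² − vh²)/(2·B) + ε ≤ max(|x|,|y|). Then the choice a = −B satisfies the admissibility condition Go, i.e.: −B ≤ a ≤ A; v + a·T ≥ 0; (v ≤ vh ∧ v + a·T ≤ vh) ∨ (1+|k|·ε)²·(v·T + a·T²/2 + ((v + a·T)² − vh²)/(2·B)) + ε ≤ max(|x|,|y|); and (vl ≤ v ∧ vl ≤ v + a·T) ∨ (1+|k|·ε)²·(v·T + a·T²/2 + (vl² − (v + a·T)²)/(2·A))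 + ε ≤ max(|x|,|y|). -/
variable {K : Type*} [Field K]

-- Braking at rate `B` lowers `v ^ 2` by `2 * B` per unit of distance, so the distance covered
-- during the cycle is exactly the decrease of the remaining braking distance.
theorem displacement_add_brakingDistance [NeZero (2 : K)] {B : K} (hB : B ≠ 0) (T v w : K) :
    v * T + -B * T ^ 2 / 2 + ((v + -B * T) ^ 2 - w ^ 2) / (2 * B) =
      (v ^ 2 - w ^ 2) / (2 * B) := by
  field_simp
  ring

variable [LinearOrder K]

/-- The admissibility condition `Go` for an acceleration `a` chosen at speed `v`: over a cycle of
length `T` the robot either respects each of the speed limits `vl` and `vh`, or has room to reach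
the limit before the waypoint. The factor `(1 + |k| * ε) ^ 2` is abstracted to `c`, and the
distance to the waypoint, `max |x| |y|`, to `d`. -/
def IsAdmissibleAccel (A B T c ε vl vh d v a : K) : Prop :=
  (-B ≤ a ∧ a ≤ A) ∧ v + a * T ≥ 0 ∧
  ((v ≤ vh ∧ v + a * T ≤ vh) ∨
    c * (v * T + a * T ^ 2 / 2 + ((v + a * T) ^ 2 - vh ^ 2) / (2 * B)) + ε ≤ d) ∧
  ((vl ≤ v ∧ vl ≤ v + a * T) ∨
    c * (v * T + a * T ^ 2 / 2 + (vl ^ 2 - (v + a * T) ^ 2) / (2 * A)) + ε ≤ d)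

theorem brake_admissible_general [IsStrictOrderedRing K] {A B T c ε vl vh d v : K}
    (hA : 0 < A) (hB : 0 < B) (hT : 0 < T) (hvl : 0 ≤ vl) (hv : vl + B * T ≤ v)
    (hdist : c * (v ^ 2 - vh ^ 2) / (2 * B) + ε ≤ d) :
    IsAdmissibleAccel A B T c ε vl vh d v (-B) := by
  have hBT : 0 < B * T := mul_pos hB hT
  have lower_le_final : vl ≤ v + -B * T := by linarith
  have lower_le_initial : vl ≤ v := by linarith
  have upper_reachable :
      c * (v * T + -B * T ^ 2 / 2 + ((v + -B * T) ^ 2 - vh ^ 2) / (2 * B)) + ε ≤ d := by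
    rwa [displacement_add_brakingDistance hB.ne', ← mul_div_assoc]
  exact ⟨⟨le_rfl, by linarith⟩, hvl.trans lower_le_final, .inr upper_reachable,
    .inl ⟨lower_le_initial, lower_le_final⟩⟩

/-- Liveness controller-satisfiability, too-fast case: if the robot is too
fast (`v > vh`) but has enough distance left to brake to `vh`, then maximal
braking `a = −B` satisfies the admissibility condition `Go`. -/
theorem brake_admissible
    (ε A B T k vl vh v x y : ℝ)
    (hε : 0 < ε) (hA : 0 < A) (hB : 0 < B) (hT : 0 < T)
    (hvl : 0 ≤ vl) (hBT : B * T ≤ vh - vl)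
    (hv : vh < v)
    (hdist : (1 + |k| * ε) ^ 2 * (v ^ 2 - vh ^ 2) / (2 * B) + ε ≤ max |x| |y|) :
    let a : ℝ := -B
    (-B ≤ a ∧ a ≤ A) ∧ v + a * T ≥ 0 ∧
    ((v ≤ vh ∧ v + a * T ≤ vh) ∨
      (1 + |k| * ε) ^ 2 *
        (v * T + a * T ^ 2 / 2 + ((v + a * T) ^ 2 - vh ^ 2) / (2 * B)) + ε
        ≤ max |x| |y|) ∧
    ((vl ≤ v ∧ vl ≤ v + a * T) ∨
      (1 + |k| * ε) ^ 2 *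
        (v * T + a * T ^ 2 / 2 + (vl ^ 2 - (v + a * T) ^ 2) / (2 * A)) + ε
        ≤ max |x| |y|) := by
  exact brake_admissible_general hA hB hT hvl (by linarith) hdist
end

section
/- Let ε > 0, A > 0, B > 0, T > 0, k ∈ ℝ, 0 ≤ vl, and vh with A·T ≤ vh − vl. Let 0 ≤ v < vl, and x, y ∈ ℝ with (1+|k|·ε)²·(vl² − v²)/(2·A) + ε ≤ max(|x|,|y|). Then the choice a = A satisfies the admissibility condition Go, i.e.: −B ≤ a ≤ A; v + a·T ≥ 0; (v ≤ vh ∧ v + a·T ≤ vh) ∨ (1+|k|·ε)²·(v·T + a·T²/2 + ((v + a·T)² − vh²)/(2·B)) + ε ≤ max(|x|,|y|); and (vl ≤ v ∧ vl ≤ v + a·T) ∨ (1+|k|·ε)²·(v·T + a·T²/2 + (vl² − (v + a·T)²)/(2·A)) + ε ≤ max(|x|,|y|). -/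
/-!
Speeding up at rate `A` for one cycle and then on to the speed `vl` covers the same signed distance
`(vl ^ 2 - v ^ 2) / (2 * A)` as speeding up from `v` to `vl` directly. The lower speed limit
therefore holds by the distance hypothesis, even if the cycle overshoots `vl`; the upper one holds
because a single cycle gains at most `vh - vl`.
-/

section Kinematics

variable {K : Type*} [Field K] [NeZero (2 : K)] {a : K}

theorem displacement_eq_sq_sub_sq_div (ha : a ≠ 0) (v t : K) :
    v * t + a * t ^ 2 / 2 = ((v + a * t) ^ 2 - v ^ 2) / (2 * a) := by
  have h_two : (2 : K) ≠ 0 := two_ne_zero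
  field_simp
  ring

theorem displacement_add_sq_sub_sq_div (ha : a ≠ 0) (v w t : K) :
    v * t + a * t ^ 2 / 2 + (w ^ 2 - (v + a * t) ^ 2) / (2 * a) =
      (w ^ 2 - v ^ 2) / (2 * a) := by
  rw [displacement_eq_sq_sub_sq_div ha, ← add_div, sub_add_sub_cancel']

end Kinematics

section Admissibility

variable {K : Type*} [Field K] [LinearOrder K]

/-- The admissibility condition `Go` for the acceleration `a` at speed `v`, with the curvature
factor `(1 + |k| * ε) ^ 2` abstracted to `c` and the waypoint distance `max |x| |y|` to `d`. -/
def Admissible (c ε A B T vl vh d v a : K) : Prop :=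
  (-B ≤ a ∧ a ≤ A) ∧ v + a * T ≥ 0 ∧
  ((v ≤ vh ∧ v + a * T ≤ vh) ∨
    c * (v * T + a * T ^ 2 / 2 + ((v + a * T) ^ 2 - vh ^ 2) / (2 * B)) + ε ≤ d) ∧
  ((vl ≤ v ∧ vl ≤ v + a * T) ∨
    c * (v * T + a * T ^ 2 / 2 + (vl ^ 2 - (v + a * T) ^ 2) / (2 * A)) + ε ≤ d)

theorem accelerate_admissible_general [IsStrictOrderedRing K] {c ε A B T vl vh d v : K}
    (hA : 0 < A) (hB : 0 < B) (hT : 0 ≤ T) (hAT : A * T ≤ vh - vl)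
    (hv0 : 0 ≤ v) (hv : v ≤ vl) (hdist : c * (vl ^ 2 - v ^ 2) / (2 * A) + ε ≤ d) :
    Admissible c ε A B T vl vh d v A := by
  have speed_gain_nonneg : 0 ≤ A * T := mul_nonneg hA.le hT
  have new_speed_le : v + A * T ≤ vh := by linarith
  have speed_le : v ≤ vh := (le_add_of_nonneg_right speed_gain_nonneg).trans new_speed_le
  refine ⟨⟨by linarith, le_rfl⟩, add_nonneg hv0 speed_gain_nonneg,
    Or.inl ⟨speed_le, new_speed_le⟩, Or.inr ?_⟩
  rwa [displacement_add_sq_sub_sq_div hA.ne', ← mul_div_assoc]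

end Admissibility

/-- Liveness controller-satisfiability, too-slow case: if the robot is too
slow (`v < vl`) but has enough distance left to speed up to `vl`, then maximal
acceleration `a = A` satisfies the admissibility condition `Go`. -/
theorem accelerate_admissible
    (ε A B T k vl vh v x y : ℝ)
    (hε : 0 < ε) (hA : 0 < A) (hB : 0 < B) (hT : 0 < T)
    (hvl : 0 ≤ vl) (hAT : A * T ≤ vh - vl)
    (hv0 : 0 ≤ v) (hv : v < vl)
    (hdist : (1 + |k| * ε) ^ 2 * (vl ^ 2 - v ^ 2) / (2 * A) + ε ≤ max |x| |y|) :
    let a : ℝ := A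
    (-B ≤ a ∧ a ≤ A) ∧ v + a * T ≥ 0 ∧
    ((v ≤ vh ∧ v + a * T ≤ vh) ∨
      (1 + |k| * ε) ^ 2 *
        (v * T + a * T ^ 2 / 2 + ((v + a * T) ^ 2 - vh ^ 2) / (2 * B)) + ε
        ≤ max |x| |y|) ∧
    ((vl ≤ v ∧ vl ≤ v + a * T) ∨
      (1 + |k| * ε) ^ 2 *
        (v * T + a * T ^ 2 / 2 + (vl ^ 2 - (v + a * T) ^ 2) / (2 * A)) + ε
        ≤ max |x| |y|) :=
  accelerate_admissible_general hA hB hT.le hAT hv0 hv.le hdist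
end

section
/- Let k ≠ 0, ε ≥ 0, τ ≥ 0, and let x, y, v : ℝ → ℝ satisfy, for all t ∈ [0, τ], x'(t) = v(t)·(k·y(t) − 1), y'(t) = −v(t)·k·x(t), v(t) ≥ 0, and x(t)² + (y(t) − 1/k)² ≤ (1/|k| + ε)². Then for all t ∈ [0, τ], max(|x(0)|,|y(0)|) − max(|x(t)|,|y(t)|) ≤ (1 + |k|·ε)·∫₀ᵗ v(s) ds; i.e., the sup-norm distance of the waypoint to the origin decreases by at most (1 + |k|·ε) times the arc length traveled. -/
/-!
Join the coordinates into a curve `p = (x, y)` in `ℝ × ℝ`, whose norm is the sup norm. Then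
`p' = v • F p`, where `F p` is `k` times the quarter turn of the displacement of `p` from the
rotation center, so `‖F p‖ ≤ |k| * (1 / |k| + ε)` on the disc. Integrating `‖p'‖` bounds the
displacement `‖p t - p 0‖`, which dominates the change of `‖p‖`.
-/

open Set MeasureTheory

lemma norm_sub_le_mul_integral_of_hasDerivAt_smul {E : Type*} [NormedAddCommGroup E]
    [NormedSpace ℝ E] {f w : ℝ → E} {v : ℝ → ℝ} {a b C : ℝ} (hab : a ≤ b)
    (hfc : ContinuousOn f (Icc a b)) (hfd : ∀ t ∈ Ioo a b, HasDerivAt f (v t • w t) t)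
    (hv : ∀ t ∈ Ioo a b, 0 ≤ v t) (hw : ∀ t ∈ Ioo a b, ‖w t‖ ≤ C)
    (hvi : IntervalIntegrable v volume a b) :
    ‖f b - f a‖ ≤ C * ∫ t in a..b, v t := by
  have speed_le (t : ℝ) (ht : t ∈ Ioo a b) : ‖deriv f t‖ ≤ C * v t := calc
    ‖deriv f t‖ = v t * ‖w t‖ := by rw [(hfd t ht).deriv, norm_smul_of_nonneg (hv t ht)]
    _ ≤ v t * C := mul_le_mul_of_nonneg_left (hw t ht) (hv t ht)
    _ = C * v t := mul_comm _ _
  rw [← intervalIntegral.integral_const_mul]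
  exact norm_sub_le_integral_of_norm_deriv_le_of_le hab hfc
    (fun t ht ↦ (hfd t ht).differentiableAt.differentiableWithinAt)
    (.of_forall speed_le) (hvi.const_mul C)

lemma norm_prodMk_le_of_sq_add_sq_le {a b R : ℝ} (hR : 0 ≤ R) (h : a ^ 2 + b ^ 2 ≤ R ^ 2) :
    ‖(a, b)‖ ≤ R :=
  norm_prod_le_iff.2
    ⟨abs_le_of_sq_le_sq ((le_add_of_nonneg_right (sq_nonneg b)).trans h) hR,
      abs_le_of_sq_le_sq ((le_add_of_nonneg_left (sq_nonneg a)).trans h) hR⟩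

/-- The vector field of the planar Dubins plant of curvature `k` at unit speed, on waypoint
positions in robot-relative coordinates. The plane is `ℝ × ℝ`, so that its norm is the sup norm. -/
def dubinsField (k : ℝ) (p : ℝ × ℝ) : ℝ × ℝ :=
  (k * p.2 - 1, -(k * p.1))

lemma smul_dubinsField_mk (k v x y : ℝ) :
    v • dubinsField k (x, y) = (v * (k * y - 1), -v * k * x) := by
  ext
  · rfl
  · simp only [dubinsField, Prod.smul_snd, smul_eq_mul]
    ring

lemma dubinsField_eq_smul {k : ℝ} (hk : k ≠ 0) (p : ℝ × ℝ) :
    dubinsField k p = k • (p.2 - 1 / k, -p.1) := by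
  simp only [dubinsField, Prod.smul_mk, smul_eq_mul, mul_sub, mul_one_div_cancel hk, mul_neg]

lemma norm_dubinsField_le {k R : ℝ} (hk : k ≠ 0) (hR : 0 ≤ R) {p : ℝ × ℝ}
    (hp : p.1 ^ 2 + (p.2 - 1 / k) ^ 2 ≤ R ^ 2) : ‖dubinsField k p‖ ≤ |k| * R := by
  rw [dubinsField_eq_smul hk, norm_smul, Real.norm_eq_abs]
  gcongr
  exact norm_prodMk_le_of_sq_add_sq_le hR (by rwa [neg_sq, add_comm])

/-- Along solutions of the planar Dubins plant ODE staying in the disc of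
radius `1/|k| + ε` about the rotation center `(0, 1/k)`, the sup-norm distance
of the waypoint to the origin decreases by at most `(1 + |k|·ε)` times the arc
length traveled. -/
theorem supnorm_lipschitz_in_arclength
    (k ε τ : ℝ) (hk : k ≠ 0) (hε : 0 ≤ ε) (hτ : 0 ≤ τ)
    (x y v : ℝ → ℝ)
    (hx : ∀ t ∈ Set.Icc (0 : ℝ) τ, HasDerivAt x (v t * (k * y t - 1)) t)
    (hy : ∀ t ∈ Set.Icc (0 : ℝ) τ, HasDerivAt y (-(v t) * k * x t) t)
    (hv : ∀ t ∈ Set.Icc (0 : ℝ) τ, 0 ≤ v t)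
    (hdisc : ∀ t ∈ Set.Icc (0 : ℝ) τ,
      x t ^ 2 + (y t - 1 / k) ^ 2 ≤ (1 / |k| + ε) ^ 2)
    (hint : IntervalIntegrable v MeasureTheory.volume 0 τ) :
    ∀ t ∈ Set.Icc (0 : ℝ) τ,
      max |x 0| |y 0| - max |x t| |y t|
        ≤ (1 + |k| * ε) * ∫ s in (0 : ℝ)..t, v s := by
  intro t ht
  let p : ℝ → ℝ × ℝ := fun s ↦ (x s, y s)
  have mem_of_mem {s : ℝ} (hs : s ∈ Icc 0 t) : s ∈ Icc 0 τ := Icc_subset_Icc_right ht.2 hs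
  have hp (s : ℝ) (hs : s ∈ Icc 0 t) : HasDerivAt p (v s • dubinsField k (p s)) s := by
    rw [smul_dubinsField_mk]
    exact (hx s (mem_of_mem hs)).prodMk (hy s (mem_of_mem hs))
  have field_le (s : ℝ) (hs : s ∈ Icc 0 t) : ‖dubinsField k (p s)‖ ≤ 1 + |k| * ε := calc
    ‖dubinsField k (p s)‖ ≤ |k| * (1 / |k| + ε) :=
      norm_dubinsField_le hk (by positivity) (hdisc s (mem_of_mem hs))
    _ = 1 + |k| * ε := by rw [mul_add, mul_one_div_cancel (abs_ne_zero.2 hk)]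
  have hvt : IntervalIntegrable v volume 0 t :=
    hint.mono_set (uIcc_subset_uIcc_left (Icc_subset_uIcc ht))
  calc
    ‖p 0‖ - ‖p t‖ ≤ ‖p t - p 0‖ := (norm_sub_norm_le _ _).trans_eq (norm_sub_rev _ _)
    _ ≤ (1 + |k| * ε) * ∫ s in (0 : ℝ)..t, v s :=
      norm_sub_le_mul_integral_of_hasDerivAt_smul ht.1 (HasDerivAt.continuousOn hp)
        (fun s hs ↦ hp s (Ioo_subset_Icc_self hs))
        (fun s hs ↦ hv s (mem_of_mem (Ioo_subset_Icc_self hs)))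
        (fun s hs ↦ field_le s (Ioo_subset_Icc_self hs)) hvt
end
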